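/- Let n ≥ 3 and a = (a_1,…,a_n) ∈ ℂ^n with each a_j purely imaginary, and let s_1,…,s_{n−1} ∈ ℂ with Re(s_j) > 0 for all j. Then U_{n,a}(s_1,…,s_{n−1}) = (2^{−1}/(4πi)^{n−2})·∫_{z_1,…,z_{n−2}} U_{n−1,ã}(z_1,…,z_{n−2})·∏_{j=1}^{n−1} Γ_ℝ(s_j−z_j−j·a_1/(n−1))·Γ_ℝ(s_j−z_{j−1}+(n−j)·a_1/(n−1)) dz_1⋯dz_{n−2}, where z_0 := 0 and z_{n−1} := −|a|. Moreover, for purely imaginary a_1, a_2 and Re(s) > 0, U_{2,(a_1,a_2)}(s) = (1/2)·Γ_ℝ(s+a_1)·Γ_ℝ(s+a_2). -/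

import Mathlib

open MeasureTheory Complex

noncomputable section

/-- `Γ_ℝ(s) = π^{-s/2} Γ(s/2)`. -/
def GammaR (s : ℂ) : ℂ := (Real.pi : ℂ) ^ (-s / 2) * Complex.Gamma (s / 2)

/-- Modified Bessel function of the second kind, via its integral representation. -/
def BesselK (ν : ℂ) (y : ℝ) : ℂ :=
  (1 / 2) * ∫ t in Set.Ioi (0 : ℝ),
    Complex.exp (-((y : ℂ) / 2) * ((t : ℂ) + 1 / (t : ℂ))) * (t : ℂ) ^ ν / (t : ℂ)

/-- Extend a finite real tuple to `ℕ`, defaulting to `1`. -/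
def extR {k : ℕ} (t : Fin k → ℝ) : ℕ → ℝ := fun i => if h : i < k then t ⟨i, h⟩ else 1

/-- Extend a finite real tuple to `ℕ`, defaulting to `0`. -/
def extR0 {k : ℕ} (t : Fin k → ℝ) : ℕ → ℝ := fun i => if h : i < k then t ⟨i, h⟩ else 0

/-- The positive orthant. -/
def posSet (k : ℕ) : Set (Fin k → ℝ) := {t | ∀ j, 0 < t j}

/-- `|a| = a_1 + ⋯ + a_n` (0-based indexing). -/
def sumA (n : ℕ) (a : ℕ → ℂ) : ℂ := ∑ j ∈ Finset.range n, a j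

/-- `ã_j = a_{j+1} + a_1/(n-1)` (0-based indexing). -/
def tildeA (n : ℕ) (a : ℕ → ℂ) : ℕ → ℂ := fun j => a (j + 1) + a 0 / ((n : ℂ) - 1)

/-- The normalized radial part `Ŵ^A_{n,a}` of the class one `GL_n(ℝ)` Whittaker function,
as a function of `(y_1,…,y_{n-1})` (0-based indexing). -/
def WhittAr : ℕ → (ℕ → ℂ) → (ℕ → ℝ) → ℂ
  | 0, _, _ => 1
  | 1, _, _ => 1
  | 2, a, y => 2 * ((y 0 : ℂ) ^ ((a 0 + a 1) / 2)) *
      BesselK ((a 0 - a 1) / 2) (2 * Real.pi * y 0)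
  | (n + 3), a, y =>
      ∫ t in posSet (n + 2),
        WhittAr (n + 2) (tildeA (n + 3) a)
            (fun j => y (j + 1) * Real.sqrt (extR t (j + 1) / extR t j)) *
          (∏ j ∈ Finset.range (n + 2),
            Complex.exp (((-(Real.pi * y j) ^ 2 * extR t j - 1 / extR t j : ℝ) : ℂ)) *
              ((Real.pi * y j : ℝ) : ℂ) ^ ((((n + 2 - j : ℕ) : ℂ) * a 0) / ((n + 2 : ℕ) : ℂ)) *
              ((extR t j : ℝ) : ℂ) ^ ((((n + 3 : ℕ) : ℂ) * a 0) / (2 * ((n + 2 : ℕ) : ℂ)))) *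
          ((Real.pi * extR t (n + 1) : ℝ) : ℂ) ^ (-(sumA (n + 3) a) / 2) *
          (∏ j ∈ Finset.range (n + 2), ((extR t j : ℝ) : ℂ))⁻¹

/-- `Ŵ^A_{n,a}` as a function of the full tuple `(y_1,…,y_n)`. -/
def WhittAhat (n : ℕ) (a : ℕ → ℂ) (y : ℕ → ℝ) : ℂ :=
  ((y (n - 1) : ℝ) : ℂ) ^ sumA n a * WhittAr n a y

/-- The Mellin transform `U_{n,a}` (0-based: `s j` stands for `s_{j+1}`). -/
def Ufun (n : ℕ) (a : ℕ → ℂ) (s : ℕ → ℂ) : ℂ :=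
  ∫ y in posSet (n - 1),
    WhittAr n a (extR y) *
      ∏ j ∈ Finset.range (n - 1), ((extR y j : ℝ) : ℂ) ^ s j / ((extR y j : ℝ) : ℂ)

/-- The normalized radial part `Ŵ^B_{n,b}` of the class one `SO_{2n+1}(ℝ)` Whittaker function. -/
def WhittBr : ℕ → (ℕ → ℂ) → (ℕ → ℝ) → ℂ
  | 0, _, _ => 1
  | 1, b, y => 2 * BesselK (b 0 / 2) (2 * Real.pi * y 0)
  | (n + 2), b, y =>
      ∫ p in (posSet (n + 2) ×ˢ posSet (n + 1)),
        WhittBr (n + 1) b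
            (fun j =>
              if j < n then
                y (j + 1) *
                  Real.sqrt (extR p.1 (j + 1) * extR p.2 (j + 1) /
                    (extR p.1 (j + 2) * extR p.2 j))
              else y (n + 1) * Real.sqrt (extR p.1 (n + 1) / extR p.2 n)) *
          (∏ j ∈ Finset.range (n + 2),
            Complex.exp (((-(Real.pi * y j) ^ 2 * extR p.1 j - 1 / extR p.1 j : ℝ) : ℂ)) *
              ((Real.pi * y j : ℝ) : ℂ) ^ b (n + 1)) *
          (∏ j ∈ Finset.range (n + 1),
            Complex.exp (((-(Real.pi * y j) ^ 2 * (extR p.1 j / extR p.1 (j + 1)) * extR p.2 j -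
                  1 / extR p.2 j : ℝ) : ℂ)) *
              ((extR p.1 (j + 1) * extR p.2 j : ℝ) : ℂ) ^ (b (n + 1) / 2)) *
          ((extR p.1 0 : ℝ) : ℂ) ^ b (n + 1) *
          (∏ j ∈ Finset.range (n + 1), ((extR p.2 j : ℝ) : ℂ))⁻¹ *
          (∏ j ∈ Finset.range (n + 2), ((extR p.1 j : ℝ) : ℂ))⁻¹

/-- The Mellin transform `V_{n,b}` (0-based: `s j` stands for `s_{j+1}`). -/
def Vfun (n : ℕ) (b : ℕ → ℂ) (s : ℕ → ℂ) : ℂ :=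
  ∫ y in posSet n,
    WhittBr n b (extR y) *
      ∏ j ∈ Finset.range n, ((extR y j : ℝ) : ℂ) ^ s j / ((extR y j : ℝ) : ℂ)

/-- Integral over the vertical line `Re z = c`, i.e. `i·∫_ℝ f(c+it) dt`. -/
def VInt (c : ℝ) (f : ℂ → ℂ) : ℂ := Complex.I * ∫ t : ℝ, f (c + t * Complex.I)

/-- Iterated integral over `k` vertical lines with abscissas `c 0, …, c (k-1)`;
the integrand is fed the contour points as a 0-based sequence. -/
def VIntK (k : ℕ) (c : ℕ → ℝ) (f : (ℕ → ℂ) → ℂ) : ℂ :=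
  Complex.I ^ k * ∫ t : Fin k → ℝ, f (fun i => (c i : ℂ) + (extR0 t i : ℝ) * Complex.I)



/-- The extension of the integration variables `z_1,…,z_{n-2}` by the
conventions `z_0 = 0`, `z_{n-1} = -|a|` (1-based indexing). -/
def Zext (n : ℕ) (a : ℕ → ℂ) (z : ℕ → ℂ) : ℕ → ℂ :=
  fun i => if i = 0 then 0 else if i ≤ n - 2 then z (i - 1) else -sumA n a

/-!
In the logarithmic coordinates `x_j = 2 log (π y_j)` the recursion for `Ŵ^A` becomes a convolution
in which each `t_j` contributes a product of two kernels `exp (s x - e^x)`, whose bilateral Laplace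
transforms are `z ↦ Γ(s + z)`. Convolving two such kernels in one variable gives a `K`-Bessel
function, so the Laplace transform of the recursion integrates `Ŵ^A_{n-1,ã}` against a product of
`n - 2` Bessel kernels, times two free Gamma factors. As the Laplace transform of each Bessel kernel
is `Γ(p + z) Γ(q + z)`, Fourier inversion (Parseval) turns this into an integral of the transform of
`Ŵ^A_{n-1,ã}` over vertical lines, and the powers of `π` combine to change `Γ` into `Γ_ℝ`.

Parseval requires absolute convergence of the transform of `Ŵ^A_{n-1,ã}` on the contour. This is
proved by induction on `n` for arbitrary `a`, on the region cut out by the expected poles: for real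
parts of `a` that vanish this is the region of positive real parts, and in general a contour
abscissa exists because each lower bound on it, coming from a pole of `U_{n-1,ã}`, is less than
each of the two upper bounds coming from the Gamma factors.
-/

section GammaKernel

open scoped FourierTransform Convolution

/-- The integrand of `Γ(s) = ∫ t ^ (s - 1) e^{-t} dt` in the coordinate `x = log t`. -/
def gammaKernel (s : ℂ) (x : ℝ) : ℂ := cexp (s * x - (Real.exp x : ℝ))

theorem continuous_gammaKernel (s : ℂ) : Continuous (gammaKernel s) := by
  unfold gammaKernel
  fun_prop

theorem gammaKernel_add (s z : ℂ) (x : ℝ) :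
    gammaKernel (s + z) x = gammaKernel s x * cexp (z * x) := by
  rw [gammaKernel, gammaKernel, ← Complex.exp_add]
  ring_nf

theorem norm_gammaKernel (s : ℂ) (x : ℝ) :
    ‖gammaKernel s x‖ = Real.exp (s.re * x - Real.exp x) := by
  rw [gammaKernel, Complex.norm_exp, sub_re, re_mul_ofReal, ofReal_re]

theorem norm_gammaKernel_le {s : ℂ} (hs : 0 < s.re) (x : ℝ) :
    ‖gammaKernel s x‖ ≤ Real.exp (s.re ^ 2 / 2) := by
  rw [norm_gammaKernel, Real.exp_le_exp]
  rcases le_total 0 x with hx | hx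
  · nlinarith [Real.quadratic_le_exp_of_nonneg hx, sq_nonneg (s.re - x)]
  · nlinarith [Real.exp_pos x, mul_nonpos_of_nonneg_of_nonpos hs.le hx]

theorem exp_mul_gammaIntegrand (s : ℂ) (x : ℝ) :
    |Real.exp x| • ((Real.exp (-Real.exp x) : ℂ) * (Real.exp x : ℂ) ^ (s - 1)) =
      gammaKernel s x := by
  have hx : (Real.exp x : ℂ) ≠ 0 := by simp
  rw [abs_of_pos (Real.exp_pos x), Complex.real_smul, gammaKernel, Complex.cpow_def_of_ne_zero hx,
    ← Complex.ofReal_log (Real.exp_pos x).le, Real.log_exp, Complex.ofReal_exp, Complex.ofReal_exp,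
    ← Complex.exp_add, ← Complex.exp_add]
  push_cast
  ring_nf

theorem integrable_gammaKernel {s : ℂ} (hs : 0 < s.re) : Integrable (gammaKernel s) := by
  have h := Complex.GammaIntegral_convergent hs
  rw [← Real.range_exp, ← Set.image_univ, integrableOn_image_iff_integrableOn_abs_deriv_smul
    .univ (fun x _ => (Real.hasDerivAt_exp x).hasDerivWithinAt) Real.exp_injective.injOn,
    integrableOn_univ] at h
  simpa only [exp_mul_gammaIntegrand] using h

theorem integral_gammaKernel {s : ℂ} (hs : 0 < s.re) : ∫ x, gammaKernel s x = Gamma s := by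
  rw [Complex.Gamma_eq_integral hs, Complex.GammaIntegral, ← Real.range_exp, ← Set.image_univ,
    integral_image_eq_integral_abs_deriv_smul .univ
      (fun x _ => (Real.hasDerivAt_exp x).hasDerivWithinAt) Real.exp_injective.injOn,
    setIntegral_univ]
  simp only [exp_mul_gammaIntegrand]

theorem norm_Gamma_le_of_re_pos {s : ℂ} (hs : 0 < s.re) : ‖Gamma s‖ ≤ Real.Gamma s.re := by
  have hs' : 0 < (s.re : ℂ).re := hs
  have hnorm (x : ℝ) : (‖gammaKernel s x‖ : ℂ) = gammaKernel s.re x := by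
    rw [norm_gammaKernel, gammaKernel]
    push_cast
    rfl
  have hint : ∫ x, ‖gammaKernel s x‖ = Real.Gamma s.re := Complex.ofReal_injective <| by
    rw [← integral_complex_ofReal, ← Complex.Gamma_ofReal, ← integral_gammaKernel hs']
    simp only [hnorm]
  rw [← integral_gammaKernel hs, ← hint]
  exact norm_integral_le_integral_norm _

theorem norm_Gamma_le_div_sq_norm {s : ℂ} (hs : 0 < s.re) :
    ‖Gamma s‖ ≤ Real.Gamma (s.re + 2) / ‖s‖ ^ 2 := by
  have h0 : s ≠ 0 := fun h => by simp [h] at hs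
  have h1 : s + 1 ≠ 0 := fun h => by
    have : s.re + 1 = 0 := congrArg Complex.re h
    linarith
  have hle : ‖s‖ ≤ ‖s + 1‖ := by
    rw [← sq_le_sq₀ (norm_nonneg _) (norm_nonneg _), Complex.sq_norm, Complex.sq_norm,
      Complex.normSq_apply, Complex.normSq_apply, add_re, add_im, one_re, one_im]
    linarith
  rw [le_div_iff₀ (by positivity)]
  calc ‖Gamma s‖ * ‖s‖ ^ 2 = ‖s‖ * (‖s‖ * ‖Gamma s‖) := by ring
    _ ≤ ‖s + 1‖ * (‖s‖ * ‖Gamma s‖) := by gcongr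
    _ = ‖Gamma (s + 2)‖ := by
      rw [← norm_mul, ← norm_mul, ← Gamma_add_one s h0, ← Gamma_add_one _ h1]
      ring_nf
    _ ≤ Real.Gamma (s.re + 2) := by
      simpa using norm_Gamma_le_of_re_pos (s := s + 2) (by simpa using by linarith)

theorem sub_ofReal_mul_I_re (s : ℂ) (t : ℝ) : (s - t * I).re = s.re := by simp

theorem continuous_Gamma_sub_mul_I {s : ℂ} (hs : 0 < s.re) :
    Continuous fun t : ℝ => Gamma (s - t * I) := by
  refine continuous_iff_continuousAt.2 fun t => ?_
  refine ContinuousAt.comp (f := fun t : ℝ => s - t * I)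
    (differentiableAt_Gamma _ fun m h => ?_).continuousAt (by fun_prop)
  have : s.re = -m := by simpa using congrArg Complex.re h
  linarith [m.cast_nonneg (α := ℝ)]

theorem integrable_inv_sq_norm_sub_mul_I {s : ℂ} (hs : s.re ≠ 0) :
    Integrable fun t : ℝ => (‖s - t * I‖ ^ 2)⁻¹ := by
  have h := (((integrable_inv_one_add_sq.comp_div hs).comp_sub_left s.im).const_mul (s.re ^ 2)⁻¹)
  refine h.congr (.of_forall fun t => ?_)
  have ht : ‖s - t * I‖ ^ 2 = s.re ^ 2 + (s.im - t) ^ 2 := by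
    rw [Complex.sq_norm, Complex.normSq_apply]
    simp
    ring
  simp only [ht, ← mul_inv]
  congr 1
  field_simp

theorem integrable_Gamma_sub_mul_I {s : ℂ} (hs : 0 < s.re) :
    Integrable fun t : ℝ => Gamma (s - t * I) := by
  refine ((integrable_inv_sq_norm_sub_mul_I hs.ne').const_mul (Real.Gamma (s.re + 2))).mono'
    (continuous_Gamma_sub_mul_I hs).aestronglyMeasurable (.of_forall fun t => ?_)
  have h := norm_Gamma_le_div_sq_norm (s := s - t * I) (by simpa using hs)
  simpa only [sub_ofReal_mul_I_re, div_eq_mul_inv] using h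

theorem integrable_Gamma_mul_Gamma_sub_mul_I {p q : ℂ} (hp : 0 < p.re) (hq : 0 < q.re) :
    Integrable fun t : ℝ => Gamma (p - t * I) * Gamma (q - t * I) := by
  refine (integrable_Gamma_sub_mul_I hp).mul_bdd (c := Real.Gamma q.re)
    (continuous_Gamma_sub_mul_I hq).aestronglyMeasurable (.of_forall fun t => ?_)
  simpa using norm_Gamma_le_of_re_pos (s := q - t * I) (by simpa using hq)

theorem fourier_gammaKernel {s : ℂ} (hs : 0 < s.re) (ξ : ℝ) :
    𝓕 (gammaKernel s) ξ = Gamma (s - (2 * Real.pi * ξ : ℝ) * I) := by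
  rw [Real.fourier_real_eq_integral_exp_smul, ← integral_gammaKernel (by simpa using hs)]
  refine integral_congr_ae (.of_forall fun x => ?_)
  simp only [sub_eq_add_neg s, gammaKernel_add, smul_eq_mul]
  rw [mul_comm]
  push_cast
  ring_nf

/-- The convolution of two Gamma kernels: the function of `x = log y` whose Mellin transform in `y`
is `z ↦ Γ(p + z) Γ(q + z)`, essentially a `K`-Bessel function. -/
def barnesKernel (p q : ℂ) : ℝ → ℂ :=
  gammaKernel p ⋆[ContinuousLinearMap.mul ℂ ℂ] gammaKernel q

theorem barnesKernel_eq_integral (p q : ℂ) (x : ℝ) :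
    barnesKernel p q x = ∫ u, gammaKernel p u * gammaKernel q (x - u) := rfl

theorem barnesKernel_add (p q z : ℂ) (x : ℝ) :
    barnesKernel (p + z) (q + z) x = barnesKernel p q x * cexp (z * x) := by
  simp only [barnesKernel_eq_integral, ← integral_mul_const, gammaKernel_add]
  refine integral_congr_ae (.of_forall fun u => ?_)
  have : cexp (z * x) = cexp (z * u) * cexp (z * (x - u : ℝ)) := by
    rw [← Complex.exp_add]
    push_cast
    ring_nf
  simp only [this]
  ring

theorem fourier_barnesKernel {p q : ℂ} (hp : 0 < p.re) (hq : 0 < q.re) (ξ : ℝ) :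
    𝓕 (barnesKernel p q) ξ =
      Gamma (p - (2 * Real.pi * ξ : ℝ) * I) * Gamma (q - (2 * Real.pi * ξ : ℝ) * I) := by
  rw [barnesKernel, Real.fourier_mul_convolution_eq (integrable_gammaKernel hp)
    (integrable_gammaKernel hq), fourier_gammaKernel hp, fourier_gammaKernel hq]

theorem continuous_barnesKernel {p q : ℂ} (hp : 0 < p.re) (hq : 0 < q.re) :
    Continuous (barnesKernel p q) :=
  BddAbove.continuous_convolution_right_of_integrable _
    ⟨_, Set.forall_mem_range.2 (norm_gammaKernel_le hq)⟩ (integrable_gammaKernel hp)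
    (continuous_gammaKernel q)

theorem barnesKernel_eq_integral_Gamma_mul_Gamma {p q : ℂ} (hp : 0 < p.re) (hq : 0 < q.re)
    (x : ℝ) :
    barnesKernel p q x = (2 * Real.pi : ℂ)⁻¹ *
      ∫ t : ℝ, cexp (t * I * x) * (Gamma (p - t * I) * Gamma (q - t * I)) := by
  have hF : 𝓕 (barnesKernel p q) = fun ξ : ℝ =>
      Gamma (p - (2 * Real.pi * ξ : ℝ) * I) * Gamma (q - (2 * Real.pi * ξ : ℝ) * I) :=
    funext (fourier_barnesKernel hp hq)
  have hpi : (2 * Real.pi : ℝ) ≠ 0 := by positivity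
  have hint : Integrable (𝓕 (barnesKernel p q)) := by
    rw [hF]
    exact (integrable_Gamma_mul_Gamma_sub_mul_I hp hq).comp_mul_left' hpi
  have hinv := congrFun ((continuous_barnesKernel hp hq).fourierInv_fourier_eq
    ((integrable_gammaKernel hp).integrable_convolution _ (integrable_gammaKernel hq)) hint) x
  rw [← hinv, Real.fourierInv_eq', hF]
  have := Measure.integral_comp_mul_left
    (fun t : ℝ => cexp (t * I * x) * (Gamma (p - t * I) * Gamma (q - t * I))) (2 * Real.pi)
  rw [abs_of_pos (by positivity), Complex.real_smul] at this
  push_cast at this ⊢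
  rw [← this]
  refine integral_congr_ae (.of_forall fun ξ => ?_)
  simp [mul_comm, mul_left_comm, mul_assoc]

end GammaKernel

section Parseval

variable {ι : Type*} [Fintype ι]

/-- The exponential `v ↦ exp (z · v)`, i.e. the monomial `∏ y_j ^ z_j` in the coordinates
`v_j = log y_j`. -/
def expDot (z : ι → ℂ) (v : ι → ℝ) : ℂ := cexp (∑ j, z j * v j)

/-- The bilateral Laplace transform, i.e. the Mellin transform in logarithmic coordinates. -/
def laplace (φ : (ι → ℝ) → ℂ) (z : ι → ℂ) : ℂ := ∫ v, φ v * expDot z v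

/-- The product of the Gamma kernels with parameters `p j`. -/
def piGammaKernel (p : ι → ℂ) (v : ι → ℝ) : ℂ := ∏ j, gammaKernel (p j) (v j)

/-- The product of the Barnes kernels with parameters `p j` and `q j`. -/
def piBarnesKernel (p q : ι → ℂ) (v : ι → ℝ) : ℂ := ∏ j, barnesKernel (p j) (q j) (v j)

theorem expDot_eq_prod (z : ι → ℂ) (v : ι → ℝ) : expDot z v = ∏ j, cexp (z j * v j) :=
  Complex.exp_sum _ _

theorem expDot_add_left (z w : ι → ℂ) (v : ι → ℝ) :
    expDot (z + w) v = expDot z v * expDot w v := by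
  simp only [expDot, Pi.add_apply, add_mul, Finset.sum_add_distrib, Complex.exp_add]

theorem expDot_add_right (z : ι → ℂ) (v w : ι → ℝ) :
    expDot z (v + w) = expDot z v * expDot z w := by
  simp only [expDot, Pi.add_apply, Complex.ofReal_add, mul_add, Finset.sum_add_distrib,
    Complex.exp_add]

theorem norm_expDot_mul_I (t v : ι → ℝ) : ‖expDot (fun j => t j * I) v‖ = 1 := by
  simp [expDot, Complex.norm_exp]

theorem continuous_piGammaKernel (p : ι → ℂ) : Continuous (piGammaKernel p) :=
  continuous_finsetProd _ fun j _ => (continuous_gammaKernel (p j)).comp (continuous_apply j)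

theorem piGammaKernel_add (p z : ι → ℂ) (v : ι → ℝ) :
    piGammaKernel (p + z) v = piGammaKernel p v * expDot z v := by
  simp only [piGammaKernel, expDot_eq_prod, Pi.add_apply, gammaKernel_add, Finset.prod_mul_distrib]

theorem integrable_piGammaKernel {p : ι → ℂ} (hp : ∀ j, 0 < (p j).re) :
    Integrable (piGammaKernel p) :=
  Integrable.fintype_prod fun j => integrable_gammaKernel (hp j)

theorem norm_piGammaKernel_le {p : ι → ℂ} (hp : ∀ j, 0 < (p j).re) (v : ι → ℝ) :
    ‖piGammaKernel p v‖ ≤ ∏ j, Real.exp ((p j).re ^ 2 / 2) := by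
  rw [piGammaKernel, norm_prod]
  exact Finset.prod_le_prod (fun _ _ => norm_nonneg _) fun j _ => norm_gammaKernel_le (hp j) _

theorem piBarnesKernel_add (p q z : ι → ℂ) (v : ι → ℝ) :
    piBarnesKernel (p + z) (q + z) v = piBarnesKernel p q v * expDot z v := by
  simp only [piBarnesKernel, expDot_eq_prod, Pi.add_apply, barnesKernel_add,
    Finset.prod_mul_distrib]

theorem piBarnesKernel_eq_integral (p q : ι → ℂ) (v : ι → ℝ) :
    piBarnesKernel p q v = ∫ u, piGammaKernel p u * piGammaKernel q (v - u) := by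
  simp only [piBarnesKernel, barnesKernel_eq_integral, piGammaKernel, Pi.sub_apply,
    ← Finset.prod_mul_distrib]
  exact (integral_fintype_prod_volume_eq_prod
    fun j u => gammaKernel (p j) u * gammaKernel (q j) (v j - u)).symm

theorem piBarnesKernel_eq_integral_Gamma_mul_Gamma {p q : ι → ℂ} (hp : ∀ j, 0 < (p j).re)
    (hq : ∀ j, 0 < (q j).re) (v : ι → ℝ) :
    piBarnesKernel p q v = ((2 * Real.pi : ℂ) ^ Fintype.card ι)⁻¹ *
      ∫ t : ι → ℝ, expDot (fun j => t j * I) v *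
        ∏ j, Gamma (p j - t j * I) * Gamma (q j - t j * I) := by
  simp only [piBarnesKernel, expDot_eq_prod,
    barnesKernel_eq_integral_Gamma_mul_Gamma (hp _) (hq _), ← Finset.prod_mul_distrib,
    integral_fintype_prod_volume_eq_prod fun (j : ι) (t : ℝ) =>
      cexp (t * I * v j) * (Gamma (p j - t * I) * Gamma (q j - t * I))]
  rw [Finset.prod_mul_distrib, Finset.prod_const, Finset.card_univ, inv_pow]

theorem integrable_prod_Gamma_mul_Gamma {p q : ι → ℂ} (hp : ∀ j, 0 < (p j).re)
    (hq : ∀ j, 0 < (q j).re) :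
    Integrable fun t : ι → ℝ => ∏ j, Gamma (p j - t j * I) * Gamma (q j - t j * I) :=
  Integrable.fintype_prod (f := fun j (t : ℝ) => Gamma (p j - t * I) * Gamma (q j - t * I))
    fun j => integrable_Gamma_mul_Gamma_sub_mul_I (hp j) (hq j)

theorem integral_mul_piBarnesKernel_of_integrable {φ : (ι → ℝ) → ℂ} (hφ : Integrable φ)
    {p q : ι → ℂ} (hp : ∀ j, 0 < (p j).re) (hq : ∀ j, 0 < (q j).re) :
    ∫ v, φ v * piBarnesKernel p q v = ((2 * Real.pi : ℂ) ^ Fintype.card ι)⁻¹ *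
      ∫ t : ι → ℝ, laplace φ (fun j => t j * I) *
        ∏ j, Gamma (p j - t j * I) * Gamma (q j - t j * I) := by
  set G : (ι → ℝ) → ℂ := fun t => ∏ j, Gamma (p j - t j * I) * Gamma (q j - t j * I)
  have hG : Integrable G := integrable_prod_Gamma_mul_Gamma hp hq
  have hjoint : Integrable fun z : (ι → ℝ) × (ι → ℝ) =>
      φ z.1 * G z.2 * expDot (fun j => z.2 j * I) z.1 :=
    (hφ.mul_prod hG).mul_bdd (c := 1) (by unfold expDot; fun_prop)
      (.of_forall fun z => (norm_expDot_mul_I z.2 z.1).le)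
  calc ∫ v, φ v * piBarnesKernel p q v
      = ((2 * Real.pi : ℂ) ^ Fintype.card ι)⁻¹ *
          ∫ v, ∫ t, φ v * G t * expDot (fun j => t j * I) v := by
        rw [← integral_const_mul]
        refine integral_congr_ae (.of_forall fun v => ?_)
        simp only [piBarnesKernel_eq_integral_Gamma_mul_Gamma hp hq, mul_assoc,
          integral_const_mul, G]
        simp only [mul_comm, mul_left_comm]
    _ = ((2 * Real.pi : ℂ) ^ Fintype.card ι)⁻¹ *
          ∫ t, ∫ v, φ v * G t * expDot (fun j => t j * I) v := by
        rw [integral_integral_swap hjoint]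
    _ = _ := by
        simp only [laplace, ← integral_mul_const, mul_right_comm (φ _) (G _), G]

theorem laplace_mul_expDot (φ : (ι → ℝ) → ℂ) (c z : ι → ℂ) :
    laplace (fun v => φ v * expDot c v) z = laplace φ (c + z) := by
  simp only [laplace, expDot_add_left, mul_assoc]

theorem integral_mul_piBarnesKernel {φ : (ι → ℝ) → ℂ} {c p q : ι → ℂ}
    (hφ : Integrable fun v => φ v * expDot c v) (hp : ∀ j, (c j).re < (p j).re)
    (hq : ∀ j, (c j).re < (q j).re) :
    ∫ v, φ v * piBarnesKernel p q v = ((2 * Real.pi : ℂ) ^ Fintype.card ι)⁻¹ *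
      ∫ t : ι → ℝ, laplace φ (fun j => c j + t j * I) *
        ∏ j, Gamma (p j - (c j + t j * I)) * Gamma (q j - (c j + t j * I)) := by
  have h := integral_mul_piBarnesKernel_of_integrable hφ (p := p - c) (q := q - c)
    (fun j => by simpa using hp j) (fun j => by simpa using hq j)
  simp only [laplace_mul_expDot, mul_right_comm _ (expDot c _), mul_assoc (φ _),
    ← piBarnesKernel_add, sub_add_cancel, Pi.sub_apply, sub_sub] at h
  exact h

end Parseval

section WhittStep

theorem integrable_mul_piGammaKernel_sub {ι : Type*} [Fintype ι] {φ : (ι → ℝ) → ℂ}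
    {c p q : ι → ℂ} (hφ : Integrable fun v => φ v * expDot c v)
    (hp : ∀ j, (c j).re < (p j).re) (hq : ∀ j, (c j).re < (q j).re) :
    Integrable fun z : (ι → ℝ) × (ι → ℝ) =>
      φ z.2 * (piGammaKernel p z.1 * piGammaKernel q (z.2 - z.1)) := by
  have hpc : ∀ j, 0 < ((p - c) j).re := fun j => by simpa using hp j
  have hqc : ∀ j, 0 < ((q - c) j).re := fun j => by simpa using hq j
  have h : Integrable fun z : (ι → ℝ) × (ι → ℝ) => piGammaKernel (p - c) z.1 *
      (φ z.2 * expDot c z.2) * piGammaKernel (q - c) (z.2 - z.1) :=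
    ((integrable_piGammaKernel hpc).mul_prod hφ).mul_bdd
      ((continuous_piGammaKernel _).comp (by fun_prop)).aestronglyMeasurable
      (.of_forall fun z => norm_piGammaKernel_le hqc _)
  refine h.congr (.of_forall fun z => ?_)
  have hexp : expDot c z.2 = expDot c z.1 * expDot c (z.2 - z.1) := by
    rw [← expDot_add_right, add_sub_cancel]
  have hp' := piGammaKernel_add (p - c) c z.1
  have hq' := piGammaKernel_add (q - c) c (z.2 - z.1)
  rw [sub_add_cancel] at hp' hq'
  simp only [hp', hq', hexp]
  ring

theorem integrable_add_mul_piGammaKernel {ι : Type*} [Fintype ι] {φ : (ι → ℝ) → ℂ}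
    {c p q : ι → ℂ} (hφ : Integrable fun v => φ v * expDot c v)
    (hp : ∀ j, (c j).re < (p j).re) (hq : ∀ j, (c j).re < (q j).re) :
    Integrable fun z : (ι → ℝ) × (ι → ℝ) =>
      φ (z.2 + z.1) * (piGammaKernel p z.1 * piGammaKernel q z.2) := by
  have h := (measurePreserving_prod_add_right volume volume).integrable_comp_of_integrable
    (integrable_mul_piGammaKernel_sub hφ hp hq)
  simp only [Function.comp_def, add_sub_cancel_right] at h
  exact h

theorem integral_add_mul_piGammaKernel {ι : Type*} [Fintype ι] {φ : (ι → ℝ) → ℂ}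
    {c p q : ι → ℂ} (hφ : Integrable fun v => φ v * expDot c v)
    (hp : ∀ j, (c j).re < (p j).re) (hq : ∀ j, (c j).re < (q j).re) :
    ∫ z : (ι → ℝ) × (ι → ℝ), φ (z.2 + z.1) * (piGammaKernel p z.1 * piGammaKernel q z.2) =
      ∫ v, φ v * piBarnesKernel p q v := by
  calc ∫ z : (ι → ℝ) × (ι → ℝ), φ (z.2 + z.1) * (piGammaKernel p z.1 * piGammaKernel q z.2)
      = ∫ u, ∫ w, φ (w + u) * (piGammaKernel p u * piGammaKernel q w) :=
        integral_prod _ (integrable_add_mul_piGammaKernel hφ hp hq)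
    _ = ∫ u, ∫ v, φ v * (piGammaKernel p u * piGammaKernel q (v - u)) := by
        refine integral_congr_ae (.of_forall fun u => ?_)
        simpa using (integral_add_right_eq_self
          (fun v => φ v * (piGammaKernel p u * piGammaKernel q (v - u))) u)
    _ = ∫ v, ∫ u, φ v * (piGammaKernel p u * piGammaKernel q (v - u)) :=
        integral_integral_swap (integrable_mul_piGammaKernel_sub hφ hp hq)
    _ = _ := by simp only [integral_const_mul, piBarnesKernel_eq_integral]

theorem integral_comp_of_measurePreserving {α β E : Type*} [MeasurableSpace α]
    [MeasurableSpace β] [NormedAddCommGroup E] [NormedSpace ℝ E] {μ : Measure α} {ν : Measure β}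
    {f : α → β} (hf : MeasurePreserving f μ ν) {g : β → E} (hg : AEStronglyMeasurable g ν) :
    ∫ x, g (f x) ∂μ = ∫ y, g y ∂ν := by
  rw [← hf.map_eq] at hg ⊢
  exact (integral_map hf.aemeasurable hg).symm

theorem measurePreserving_prodProdProdComm {α β γ δ : Type*} [MeasurableSpace α]
    [MeasurableSpace β] [MeasurableSpace γ] [MeasurableSpace δ] (μ : Measure α) (ν : Measure β)
    (ρ : Measure γ) (τ : Measure δ) [SigmaFinite μ] [SigmaFinite ν] [SigmaFinite ρ]
    [SigmaFinite τ] :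
    MeasurePreserving (Equiv.prodProdProdComm α β γ δ) ((μ.prod ν).prod (ρ.prod τ))
      ((μ.prod ρ).prod (ν.prod τ)) := by
  have hmid : MeasurePreserving (fun z : β × γ × δ => (z.2.1, z.1, z.2.2))
      (ν.prod (ρ.prod τ)) (ρ.prod (ν.prod τ)) :=
    (measurePreserving_prodAssoc ρ ν τ).comp <| (Measure.measurePreserving_swap.prod
      (MeasurePreserving.id τ)).comp <| (measurePreserving_prodAssoc ν ρ τ).symm
  exact (measurePreserving_prodAssoc μ ρ (ν.prod τ)).symm.comp <|
    ((MeasurePreserving.id μ).prod hmid).comp <| measurePreserving_prodAssoc μ ν (ρ.prod τ)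

variable {m : ℕ}

theorem measurePreserving_last_zero_init_tail :
    MeasurePreserving fun z : (Fin (m + 1) → ℝ) × (Fin (m + 1) → ℝ) =>
      ((z.1 (Fin.last m), z.2 0), (Fin.init z.1, Fin.tail z.2)) := by
  have h := (measurePreserving_prodProdProdComm _ _ _ _).comp
    ((volume_preserving_piFinSuccAbove (fun _ : Fin (m + 1) => ℝ) (Fin.last m)).prod
      (volume_preserving_piFinSuccAbove (fun _ : Fin (m + 1) => ℝ) 0))
  have htail (x : Fin (m + 1) → ℝ) : Fin.removeNth 0 x = Fin.tail x := rfl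
  simp only [Function.comp_def, Prod.map, Equiv.prodProdProdComm, Equiv.coe_fn_mk,
    MeasurableEquiv.piFinSuccAbove_apply, Fin.insertNthEquiv_symm_apply, Fin.removeNth_last,
    htail] at h
  exact h

/-- The integrand of `whittStep`, as a function of `(u, x - u)`. -/
def whittStepKernel (φ : (Fin m → ℝ) → ℂ) (p q : Fin (m + 1) → ℂ)
    (z : (Fin (m + 1) → ℝ) × (Fin (m + 1) → ℝ)) : ℂ :=
  φ (Fin.tail z.2 + Fin.init z.1) * (piGammaKernel p z.1 * piGammaKernel q z.2)

/-- The operator that raises a Whittaker function on `GL_{m+1}` to one on `GL_{m+2}`, in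
logarithmic coordinates and up to a power of `π`. -/
def whittStep (φ : (Fin m → ℝ) → ℂ) (p q : Fin (m + 1) → ℂ) (x : Fin (m + 1) → ℝ) : ℂ :=
  ∫ u, whittStepKernel φ p q (u, x - u)

theorem whittStep_mul_expDot (φ : (Fin m → ℝ) → ℂ) (p q z : Fin (m + 1) → ℂ)
    (x : Fin (m + 1) → ℝ) :
    whittStep φ p q x * expDot z x = whittStep φ (p + z) (q + z) x := by
  simp only [whittStep, ← integral_mul_const]
  refine integral_congr_ae (.of_forall fun u => ?_)
  have hexp : expDot z x = expDot z u * expDot z (x - u) := by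
    rw [← expDot_add_right, add_sub_cancel]
  simp only [whittStepKernel, piGammaKernel_add, hexp]
  ring

theorem piGammaKernel_succ (p : Fin (m + 1) → ℂ) (u : Fin (m + 1) → ℝ) :
    piGammaKernel p u = gammaKernel (p 0) (u 0) * piGammaKernel (Fin.tail p) (Fin.tail u) :=
  Fin.prod_univ_succ _

theorem piGammaKernel_castSucc (p : Fin (m + 1) → ℂ) (u : Fin (m + 1) → ℝ) :
    piGammaKernel p u = piGammaKernel (Fin.init p) (Fin.init u) *
      gammaKernel (p (Fin.last m)) (u (Fin.last m)) :=
  Fin.prod_univ_castSucc _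

variable {φ : (Fin m → ℝ) → ℂ} {c : Fin m → ℂ} {p q : Fin (m + 1) → ℂ}

theorem whittStepKernel_eq (φ : (Fin m → ℝ) → ℂ) (p q : Fin (m + 1) → ℂ)
    (z : (Fin (m + 1) → ℝ) × (Fin (m + 1) → ℝ)) :
    whittStepKernel φ p q z =
      gammaKernel (p (Fin.last m)) (z.1 (Fin.last m)) * gammaKernel (q 0) (z.2 0) *
        (φ (Fin.tail z.2 + Fin.init z.1) * (piGammaKernel (Fin.init p) (Fin.init z.1) *
          piGammaKernel (Fin.tail q) (Fin.tail z.2))) := by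
  rw [whittStepKernel, piGammaKernel_castSucc p, piGammaKernel_succ q]
  ring

/-- The hypotheses under which the Laplace transform of `whittStep φ p q` converges absolutely at
the origin: that of `φ` does so at `c`, and the arguments of the resulting Gamma factors
`Γ(q_0)`, `Γ(p_m)`, `Γ(p_j - c_j)` and `Γ(q_{j+1} - c_j)` have positive real parts. -/
structure StepConvergent (φ : (Fin m → ℝ) → ℂ) (c : Fin m → ℂ) (p q : Fin (m + 1) → ℂ) : Prop where
  integrable : Integrable fun v => φ v * expDot c v
  left : ∀ j : Fin m, (c j).re < (p j.castSucc).re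
  right : ∀ j : Fin m, (c j).re < (q j.succ).re
  last : 0 < (p (Fin.last m)).re
  zero : 0 < (q 0).re

theorem StepConvergent.integrable_whittStepKernel (h : StepConvergent φ c p q) :
    Integrable (whittStepKernel φ p q) := by
  have hsep := measurePreserving_last_zero_init_tail.integrable_comp_of_integrable <|
    ((integrable_gammaKernel h.last).mul_prod (integrable_gammaKernel h.zero)).mul_prod
      (integrable_add_mul_piGammaKernel (p := Fin.init p) (q := Fin.tail q) h.integrable h.left
        h.right)
  exact hsep.congr (.of_forall fun z => (whittStepKernel_eq φ p q z).symm)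

theorem StepConvergent.integral_whittStepKernel (h : StepConvergent φ c p q) :
    ∫ z, whittStepKernel φ p q z = Gamma (q 0) * Gamma (p (Fin.last m)) *
      ∫ v, φ v * piBarnesKernel (Fin.init p) (Fin.tail q) v := by
  let ends : ℝ × ℝ → ℂ := fun y => gammaKernel (p (Fin.last m)) y.1 * gammaKernel (q 0) y.2
  let body : (Fin m → ℝ) × (Fin m → ℝ) → ℂ := fun y =>
    φ (y.2 + y.1) * (piGammaKernel (Fin.init p) y.1 * piGammaKernel (Fin.tail q) y.2)
  have hends : Integrable ends :=
    (integrable_gammaKernel h.last).mul_prod (integrable_gammaKernel h.zero)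
  have hbody : Integrable body := integrable_add_mul_piGammaKernel h.integrable h.left h.right
  have hends_eq : ∫ y, ends y = Gamma (p (Fin.last m)) * Gamma (q 0) := by
    rw [← integral_gammaKernel h.last, ← integral_gammaKernel h.zero]
    exact integral_prod_mul _ _
  have hbody_eq : ∫ y, body y = ∫ v, φ v * piBarnesKernel (Fin.init p) (Fin.tail q) v :=
    integral_add_mul_piGammaKernel h.integrable h.left h.right
  have hmeas : AEStronglyMeasurable fun y : (ℝ × ℝ) × (Fin m → ℝ) × (Fin m → ℝ) =>
      ends y.1 * body y.2 := (hends.mul_prod hbody).aestronglyMeasurable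
  calc ∫ z, whittStepKernel φ p q z
      = ∫ z : (Fin (m + 1) → ℝ) × (Fin (m + 1) → ℝ),
          ends (z.1 (Fin.last m), z.2 0) * body (Fin.init z.1, Fin.tail z.2) := by
        simp only [whittStepKernel_eq, ends, body]
    _ = ∫ y : (ℝ × ℝ) × (Fin m → ℝ) × (Fin m → ℝ), ends y.1 * body y.2 := by
        exact integral_comp_of_measurePreserving measurePreserving_last_zero_init_tail hmeas
    _ = (∫ y, ends y) * ∫ y, body y := integral_prod_mul ends body
    _ = _ := by rw [hends_eq, hbody_eq, mul_comm (Gamma (q 0))]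

theorem StepConvergent.integrable_whittStepKernel_sub (h : StepConvergent φ c p q) :
    Integrable fun z : (Fin (m + 1) → ℝ) × (Fin (m + 1) → ℝ) =>
      whittStepKernel φ p q (z.1, z.2 - z.1) :=
  (measurePreserving_prod_sub volume volume).integrable_comp_of_integrable
    h.integrable_whittStepKernel

theorem StepConvergent.integrable_whittStep (h : StepConvergent φ c p q) :
    Integrable (whittStep φ p q) :=
  h.integrable_whittStepKernel_sub.integral_prod_right

theorem StepConvergent.integral_whittStep (h : StepConvergent φ c p q) :
    ∫ x, whittStep φ p q x = Gamma (q 0) * Gamma (p (Fin.last m)) *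
      ∫ v, φ v * piBarnesKernel (Fin.init p) (Fin.tail q) v := by
  rw [← h.integral_whittStepKernel, Measure.volume_eq_prod,
    integral_prod _ h.integrable_whittStepKernel]
  calc ∫ x, whittStep φ p q x = ∫ u, ∫ x, whittStepKernel φ p q (u, x - u) :=
        integral_integral_swap h.integrable_whittStepKernel_sub.swap
    _ = _ := integral_congr_ae (.of_forall fun u =>
        integral_sub_right_eq_self (fun w => whittStepKernel φ p q (u, w)) u)

theorem StepConvergent.integral_whittStep_eq_laplace (h : StepConvergent φ c p q) :
    ∫ x, whittStep φ p q x = Gamma (q 0) * Gamma (p (Fin.last m)) *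
      (((2 * Real.pi : ℂ) ^ m)⁻¹ * ∫ t : Fin m → ℝ, laplace φ (fun j => c j + t j * I) *
        ∏ j : Fin m, Gamma (p j.castSucc - (c j + t j * I)) *
          Gamma (q j.succ - (c j + t j * I))) := by
  have hParseval := integral_mul_piBarnesKernel (p := Fin.init p) (q := Fin.tail q) h.integrable
    h.left h.right
  rw [h.integral_whittStep, hParseval, Fintype.card_fin]
  rfl

end WhittStep

section LogCoordinates

theorem ofReal_exp_cpow (x : ℝ) (z : ℂ) : ((Real.exp x : ℝ) : ℂ) ^ z = cexp (z * x) := by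
  rw [cpow_def_of_ne_zero (by simp), ← ofReal_log (Real.exp_pos x).le, Real.log_exp, mul_comm]

theorem image_exp_pi (k : ℕ) :
    (fun (x : Fin k → ℝ) i => Real.exp (x i)) '' Set.univ = posSet k := by
  ext y
  rw [Set.image_univ, Set.mem_range]
  constructor
  · rintro ⟨x, rfl⟩ j
    exact Real.exp_pos _
  · intro hy
    exact ⟨fun i => Real.log (y i), funext fun i => Real.exp_log (hy i)⟩

theorem integral_posSet {k : ℕ} (f : (Fin k → ℝ) → ℂ) :
    ∫ y in posSet k, f y =
      ∫ x : Fin k → ℝ, f (fun i => Real.exp (x i)) * ∏ i, (Real.exp (x i) : ℂ) := by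
  let expDeriv (x : Fin k → ℝ) : (Fin k → ℝ) →L[ℝ] (Fin k → ℝ) :=
    .pi fun i => Real.exp (x i) • .proj i
  have hderiv : ∀ x ∈ Set.univ, HasFDerivWithinAt (fun (x : Fin k → ℝ) i => Real.exp (x i))
      (expDeriv x) Set.univ x := fun x _ =>
    (hasFDerivAt_pi.2 fun i => (Real.hasDerivAt_exp (x i)).comp_hasFDerivAt x
      (ContinuousLinearMap.proj (R := ℝ) i).hasFDerivAt).hasFDerivWithinAt
  have hinj : Set.InjOn (fun (x : Fin k → ℝ) i => Real.exp (x i)) Set.univ :=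
    fun x _ y _ h => funext fun i => Real.exp_injective (congrFun h i)
  have hdet (x : Fin k → ℝ) : (expDeriv x).det = ∏ i, Real.exp (x i) := by
    rw [← Matrix.det_diagonal, ← LinearMap.det_toLin', Matrix.diagonal_toLin']
    rfl
  rw [← image_exp_pi, integral_image_eq_integral_abs_det_fderiv_smul volume .univ hderiv hinj,
    setIntegral_univ]
  simp only [hdet, Finset.abs_prod, Real.abs_exp, real_smul, ofReal_prod, mul_comm]

theorem integral_Ioi_zero_eq_integral_exp (f : ℝ → ℂ) :
    ∫ y in Set.Ioi 0, f y = ∫ x, f (Real.exp x) * (Real.exp x : ℂ) := by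
  rw [← Real.range_exp, ← Set.image_univ, integral_image_eq_integral_abs_deriv_smul .univ
      (fun x _ => (Real.hasDerivAt_exp x).hasDerivWithinAt) Real.exp_injective.injOn,
    setIntegral_univ]
  simp only [Real.abs_exp, real_smul, mul_comm]

theorem BesselK_eq_integral_exp (ν : ℂ) (y : ℝ) :
    BesselK ν y = 2⁻¹ * ∫ x : ℝ,
      cexp (ν * x - (y / 2 * (Real.exp x + Real.exp (-x)) : ℝ)) := by
  rw [BesselK, integral_Ioi_zero_eq_integral_exp, one_div]
  congr 1
  refine integral_congr_ae (.of_forall fun x => ?_)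
  have hx : (Real.exp x : ℂ) ≠ 0 := by simp
  simp only
  rw [div_mul_cancel₀ _ hx, ofReal_exp_cpow, ← Complex.exp_add, Real.exp_neg]
  push_cast
  ring_nf

theorem extR_of_lt {k : ℕ} (t : Fin k → ℝ) {j : ℕ} (hj : j < k) : extR t j = t ⟨j, hj⟩ :=
  dif_pos hj

theorem extR_val {k : ℕ} (t : Fin k → ℝ) (j : Fin k) : extR t j = t j := extR_of_lt t j.2

theorem WhittAr_congr : ∀ (n : ℕ) (a : ℕ → ℂ) {y y' : ℕ → ℝ}, (∀ j < n - 1, y j = y' j) →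
    WhittAr n a y = WhittAr n a y'
  | 0, _, _, _, _ => rfl
  | 1, _, _, _, _ => rfl
  | 2, a, y, y', h => by simp only [WhittAr, h 0 (by norm_num)]
  | n + 3, a, y, y', h => by
    simp only [WhittAr]
    congr 1
    funext t
    congr 3
    · refine WhittAr_congr (n + 2) _ fun j hj => ?_
      rw [h (j + 1) (by omega)]
    · refine Finset.prod_congr rfl fun j hj => ?_
      rw [h j (by simpa using hj)]

end LogCoordinates

section LogWhitt

variable (m : ℕ) (a : ℕ → ℂ)

/-- The radial Whittaker function `Ŵ^A_{m+1,a}` as a function of `x_j = 2 log (π y_j)`. -/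
def logWhitt (x : Fin m → ℝ) : ℂ :=
  WhittAr (m + 1) a (extR fun i => Real.exp (x i / 2) / Real.pi)

/-- The exponents `P_j` for which the factors `Γ_ℝ(s_j - z_j - j a_1/(n-1))` of the recursion read
`Γ_ℝ(s_j + P_j - z_j)`, where `n = m + 2`; the convention `z_{n-1} = -|a|` is absorbed into the last
one. -/
def leftExponent : Fin (m + 1) → ℂ :=
  (fun j : Fin (m + 1) => -((j + 1) * a 0 / (m + 1))) + Pi.single (Fin.last m) (sumA (m + 2) a)

/-- The exponents `Q_j` for which the factors `Γ_ℝ(s_j - z_{j-1} + (n-j) a_1/(n-1))` of the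
recursion read `Γ_ℝ(s_j + Q_j - z_{j-1})`, where `n = m + 2`. -/
def rightExponent (j : Fin (m + 1)) : ℂ := (m + 1 - j) * a 0 / (m + 1)

theorem expDot_single {ι : Type*} [Fintype ι] [DecidableEq ι] (i : ι) (z : ℂ) (v : ι → ℝ) :
    expDot (Pi.single i z) v = cexp (z * v i) := by
  simp [expDot, Pi.single_apply]

theorem logWhitt_zero (x : Fin 0 → ℝ) : logWhitt 0 a x = 1 := rfl

theorem gammaKernel_mul_gammaKernel_sub (p q : ℂ) (x u : ℝ) :
    gammaKernel p u * gammaKernel q (x - u) =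
      cexp ((p - q) * u + q * x - (Real.exp u + Real.exp (x - u) : ℝ)) := by
  rw [gammaKernel, gammaKernel, ← Complex.exp_add]
  push_cast
  ring_nf

/-- The factor of the recursive integral for `Ŵ^A` at `y = e^{x/2} / π` and `t = e^{-u}`. -/
theorem whittFactor_eq (p q : ℂ) (x u : ℝ) :
    cexp ((-(Real.pi * (Real.exp (x / 2) / Real.pi)) ^ 2 * Real.exp (-u) - 1 / Real.exp (-u) : ℝ)) *
        ((Real.pi * (Real.exp (x / 2) / Real.pi) : ℝ) : ℂ) ^ (2 * q) *
        ((Real.exp (-u) : ℝ) : ℂ) ^ (q - p) =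
      gammaKernel p u * gammaKernel q (x - u) := by
  have hsq : Real.exp (x / 2) ^ 2 * Real.exp (-u) = Real.exp (x - u) := by
    rw [← Real.exp_nat_mul, ← Real.exp_add]
    ring_nf
  rw [mul_div_cancel₀ _ Real.pi_ne_zero, ofReal_exp_cpow, ofReal_exp_cpow, neg_mul, hsq,
    Real.exp_neg, one_div, inv_inv, gammaKernel_mul_gammaKernel_sub, ← Complex.exp_add,
    ← Complex.exp_add]
  push_cast
  ring_nf

theorem exp_half_mul_sqrt (x u v : ℝ) :
    Real.exp (x / 2) / Real.pi * √(Real.exp (-u) / Real.exp (-v)) =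
      Real.exp ((x - u + v) / 2) / Real.pi := by
  rw [← Real.exp_sub, Real.sqrt_eq_rpow, ← Real.exp_mul, div_mul_eq_mul_div, ← Real.exp_add]
  ring_nf

theorem piGammaKernel_leftExponent_half (u : Fin (m + 1) → ℝ) :
    piGammaKernel (leftExponent m a / 2) u =
      (∏ j : Fin (m + 1), gammaKernel (-((j + 1) * a 0 / (m + 1)) / 2) (u j)) *
        cexp (sumA (m + 2) a / 2 * u (Fin.last m)) := by
  have hsplit : leftExponent m a / 2 = (fun j : Fin (m + 1) => -((j + 1) * a 0 / (m + 1)) / 2) +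
      Pi.single (Fin.last m) (sumA (m + 2) a / 2) := by
    ext j
    simp only [leftExponent, Pi.add_apply, Pi.div_apply, Pi.ofNat_apply, Pi.single_apply, add_div,
      ite_div, zero_div]
  rw [hsplit, piGammaKernel_add, expDot_single]
  rfl

theorem ofReal_pi_mul_exp_neg_cpow (u : ℝ) (z : ℂ) :
    ((Real.pi * Real.exp (-u) : ℝ) : ℂ) ^ (-z / 2) =
      (Real.pi : ℂ) ^ (-z / 2) * cexp (z / 2 * u) := by
  rw [ofReal_mul, mul_cpow_ofReal_nonneg Real.pi_nonneg (Real.exp_pos _).le, ofReal_exp_cpow]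
  push_cast
  ring_nf

theorem whittWeight_eq (x u : Fin (m + 2) → ℝ) :
    (∏ j : Fin (m + 2),
      cexp ((-(Real.pi * (Real.exp (x j / 2) / Real.pi)) ^ 2 * Real.exp (-u j) -
          1 / Real.exp (-u j) : ℝ)) *
        ((Real.pi * (Real.exp (x j / 2) / Real.pi) : ℝ) : ℂ) ^
          (((m + 2 - j : ℕ) : ℂ) * a 0 / ((m + 2 : ℕ) : ℂ)) *
        ((Real.exp (-u j) : ℝ) : ℂ) ^ (((m + 3 : ℕ) : ℂ) * a 0 / (2 * ((m + 2 : ℕ) : ℂ)))) *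
      ((Real.pi * Real.exp (-u (Fin.last (m + 1))) : ℝ) : ℂ) ^ (-sumA (m + 3) a / 2) =
    (Real.pi : ℂ) ^ (-sumA (m + 3) a / 2) * (piGammaKernel (leftExponent (m + 1) a / 2) u *
      piGammaKernel (rightExponent (m + 1) a / 2) (x - u)) := by
  have hm : (m + 1 + 1 : ℂ) ≠ 0 := by exact_mod_cast (m + 1).succ_ne_zero
  have hm2 : (m + 2 : ℂ) = m + 1 + 1 := by ring
  rw [ofReal_pi_mul_exp_neg_cpow, piGammaKernel_leftExponent_half, piGammaKernel]
  simp only [Pi.sub_apply, Pi.div_apply, Pi.ofNat_apply]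
  rw [mul_left_comm, mul_right_comm, ← Finset.prod_mul_distrib]
  congr 2
  refine Finset.prod_congr rfl fun j _ => ?_
  rw [← whittFactor_eq]
  congr 3
  · rw [rightExponent, Nat.cast_sub j.2.le]
    push_cast
    ring
  · rw [rightExponent]
    push_cast
    rw [hm2]
    field_simp
    ring

theorem logWhitt_add_two (x : Fin (m + 2) → ℝ) :
    logWhitt (m + 2) a x = (Real.pi : ℂ) ^ (-sumA (m + 3) a / 2) *
      whittStep (logWhitt (m + 1) (tildeA (m + 3) a)) (leftExponent (m + 1) a / 2)
        (rightExponent (m + 1) a / 2) x := by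
  rw [logWhitt, WhittAr, integral_posSet, ← integral_neg_eq_self, whittStep, ← integral_const_mul]
  refine integral_congr_ae (.of_forall fun u => ?_)
  have harg : WhittAr (m + 2) (tildeA (m + 3) a) (fun j =>
        extR (fun i => Real.exp (x i / 2) / Real.pi) (j + 1) *
          √(extR (fun i => Real.exp (-u i)) (j + 1) / extR (fun i => Real.exp (-u i)) j)) =
      logWhitt (m + 1) (tildeA (m + 3) a) (Fin.tail (x - u) + Fin.init u) := by
    refine WhittAr_congr _ _ fun j (hj : j < m + 1) => ?_
    rw [extR_of_lt _ hj, extR_of_lt _ (Nat.lt_succ_of_lt hj), extR_of_lt _ (Nat.succ_lt_succ hj),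
      extR_of_lt _ (Nat.succ_lt_succ hj), exp_half_mul_sqrt]
    rfl
  have hlast : extR (fun i => Real.exp (-u i)) (m + 1) = Real.exp (-u (Fin.last (m + 1))) :=
    extR_val _ (Fin.last (m + 1))
  have hprod : ∏ j, (Real.exp (-u j) : ℂ) ≠ 0 := by simp [Finset.prod_ne_zero_iff]
  simp only [Finset.prod_range, extR_val, Pi.neg_apply, hlast, harg, inv_mul_cancel_right₀ hprod]
  rw [mul_assoc, whittWeight_eq, mul_left_comm, whittStepKernel]

theorem barnesKernel_eq_BesselK (p q : ℂ) (x : ℝ) :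
    barnesKernel p q x =
      2 * cexp ((p + q) * x / 2) * BesselK (q - p) (2 * Real.exp (x / 2)) := by
  rw [BesselK_eq_integral_exp, ← integral_sub_left_eq_self _ _ (x / 2), mul_right_comm,
    mul_inv_cancel_left₀ two_ne_zero, ← integral_mul_const, barnesKernel_eq_integral]
  refine integral_congr_ae (.of_forall fun t => ?_)
  have hexp : 2 * Real.exp (x / 2) / 2 * (Real.exp (x / 2 - t) + Real.exp (-(x / 2 - t))) =
      Real.exp t + Real.exp (x - t) := by
    rw [mul_div_cancel_left₀ _ two_ne_zero, mul_add, ← Real.exp_add, ← Real.exp_add]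
    ring_nf
  simp only [gammaKernel_mul_gammaKernel_sub, hexp]
  rw [← Complex.exp_add]
  push_cast
  ring_nf

theorem whittStep_fin_zero (φ : (Fin 0 → ℝ) → ℂ) (p q : Fin 1 → ℂ) (x : Fin 1 → ℝ) :
    whittStep φ p q x = φ 0 * barnesKernel (p 0) (q 0) (x 0) := by
  rw [whittStep, barnesKernel_eq_integral, ← integral_const_mul]
  refine ((volume_preserving_funUnique (Fin 1) ℝ).symm.integral_comp' _).symm.trans ?_
  refine integral_congr_ae (.of_forall fun t => ?_)
  exact congrArg₂ (· * ·) (congrArg φ (Subsingleton.elim _ _)) (by simp [piGammaKernel])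

theorem logWhitt_one (x : Fin 1 → ℝ) : logWhitt 1 a x = (Real.pi : ℂ) ^ (-sumA 2 a / 2) *
    whittStep (logWhitt 0 (tildeA 2 a)) (leftExponent 0 a / 2) (rightExponent 0 a / 2) x := by
  have hsum : sumA 2 a = a 0 + a 1 := by simp [sumA, Finset.sum_range_succ]
  have hleft : leftExponent 0 a 0 = a 1 := by simp [leftExponent, hsum]
  have hright : rightExponent 0 a 0 = a 0 := by simp [rightExponent]
  have hpow : ((Real.exp (x 0 / 2) / Real.pi : ℝ) : ℂ) ^ ((a 0 + a 1) / 2) =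
      (Real.pi : ℂ) ^ (-sumA 2 a / 2) * cexp ((a 0 + a 1) / 2 * (x 0 / 2 : ℝ)) := by
    rw [ofReal_div, div_cpow_ofReal_nonneg (Real.exp_pos _).le Real.pi_nonneg, ofReal_exp_cpow,
      hsum, neg_div, cpow_neg, div_eq_inv_mul]
  have hy : extR (fun i => Real.exp (x i / 2) / Real.pi) 0 = Real.exp (x 0 / 2) / Real.pi :=
    extR_val _ (0 : Fin 1)
  rw [logWhitt, WhittAr, hy, hpow, whittStep_fin_zero, logWhitt_zero, one_mul,
    barnesKernel_eq_BesselK, mul_assoc 2 Real.pi, mul_div_cancel₀ _ Real.pi_ne_zero]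
  simp only [Pi.div_apply, Pi.ofNat_apply, hleft, hright]
  push_cast
  ring_nf

theorem logWhitt_succ (x : Fin (m + 1) → ℝ) :
    logWhitt (m + 1) a x = (Real.pi : ℂ) ^ (-sumA (m + 2) a / 2) *
      whittStep (logWhitt m (tildeA (m + 2) a)) (leftExponent m a / 2)
        (rightExponent m a / 2) x := by
  cases m with
  | zero => exact logWhitt_one a x
  | succ m => exact logWhitt_add_two m a x

end LogWhitt

section MellinDomain

variable {m : ℕ} {a : ℕ → ℂ}

/-- The points to the right of the poles of `U_{m+1,a}`, the first of which in `s_j` are at minus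
the sums of `j` of the parameters `a_k`; the integral defining `U_{m+1,a}` converges there. -/
def mellinDomain (m : ℕ) (a : ℕ → ℂ) : Set (Fin m → ℂ) :=
  {s | ∀ j : Fin m, ∀ S ∈ (Finset.range (m + 1)).powersetCard (j + 1),
    0 < (s j + ∑ k ∈ S, a k).re}

theorem mem_mellinDomain_of_re_eq_zero {s : Fin m → ℂ} (ha : ∀ k < m + 1, (a k).re = 0)
    (hs : ∀ j, 0 < (s j).re) : s ∈ mellinDomain m a := by
  intro j S hS
  have hsum : ∑ k ∈ S, (a k).re = 0 := Finset.sum_eq_zero fun k hk =>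
    ha k (Finset.mem_range.1 ((Finset.mem_powersetCard.1 hS).1 hk))
  rw [add_re, re_sum, hsum, add_zero]
  exact hs j

theorem leftExponent_castSucc (j : Fin m) :
    leftExponent m a j.castSucc = -((j + 1) * a 0 / (m + 1)) := by
  simp [leftExponent]

theorem leftExponent_last :
    leftExponent m a (Fin.last m) = ∑ k ∈ Finset.range (m + 1), a (k + 1) := by
  have hm : (m + 1 : ℂ) ≠ 0 := by exact_mod_cast m.succ_ne_zero
  simp [leftExponent, sumA, Finset.sum_range_succ' a, mul_div_cancel_left₀ _ hm]

theorem rightExponent_zero : rightExponent m a 0 = a 0 := by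
  have hm : (m + 1 : ℂ) ≠ 0 := by exact_mod_cast m.succ_ne_zero
  simp [rightExponent, mul_div_cancel_left₀ _ hm]

theorem sum_tildeA (S : Finset ℕ) :
    ∑ k ∈ S, tildeA (m + 2) a k = ∑ k ∈ S, a (k + 1) + S.card * a 0 / (m + 1) := by
  simp only [tildeA, Finset.sum_add_distrib, Finset.sum_const, nsmul_eq_mul, mul_div_assoc]
  push_cast
  ring_nf

theorem neg_re_sum_tildeA_lt_left {s : Fin (m + 1) → ℂ} (hs : s ∈ mellinDomain (m + 1) a)
    (j : Fin m) {S : Finset ℕ} (hS : S ∈ (Finset.range (m + 1)).powersetCard (j + 1)) :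
    -(∑ k ∈ S, tildeA (m + 2) a k).re < (s j.castSucc + leftExponent m a j.castSucc).re := by
  obtain ⟨hsub, hcard⟩ := Finset.mem_powersetCard.1 hS
  have hpos := hs j.castSucc (S.map (addRightEmbedding 1)) <| by
    refine Finset.mem_powersetCard.2 ⟨fun k hk => ?_, by simpa using hcard⟩
    obtain ⟨i, hi, rfl⟩ := Finset.mem_map.1 hk
    simpa using hsub hi
  have heq : s j.castSucc + leftExponent m a j.castSucc + ∑ k ∈ S, tildeA (m + 2) a k =
      s j.castSucc + ∑ k ∈ S.map (addRightEmbedding 1), a k := by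
    rw [leftExponent_castSucc, sum_tildeA, hcard, Finset.sum_map]
    push_cast
    simp only [addRightEmbedding_apply]
    ring
  rw [← heq, add_re] at hpos
  linarith

theorem neg_re_sum_tildeA_lt_right {s : Fin (m + 1) → ℂ} (hs : s ∈ mellinDomain (m + 1) a)
    (j : Fin m) {S : Finset ℕ} (hS : S ∈ (Finset.range (m + 1)).powersetCard (j + 1)) :
    -(∑ k ∈ S, tildeA (m + 2) a k).re < (s j.succ + rightExponent m a j.succ).re := by
  obtain ⟨hsub, hcard⟩ := Finset.mem_powersetCard.1 hS
  have hzero : 0 ∉ S.map (addRightEmbedding 1) := by simp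
  have hpos := hs j.succ (insert 0 (S.map (addRightEmbedding 1))) <| by
    refine Finset.mem_powersetCard.2 ⟨fun k hk => ?_, by simp [hcard]⟩
    obtain rfl | hk := Finset.mem_insert.1 hk
    · simp
    · obtain ⟨i, hi, rfl⟩ := Finset.mem_map.1 hk
      simpa using hsub hi
  have hm : (m + 1 : ℂ) ≠ 0 := by exact_mod_cast m.succ_ne_zero
  have heq : s j.succ + rightExponent m a j.succ + ∑ k ∈ S, tildeA (m + 2) a k =
      s j.succ + ∑ k ∈ insert 0 (S.map (addRightEmbedding 1)), a k := by
    rw [rightExponent, sum_tildeA, hcard, Fin.val_succ, Finset.sum_insert hzero, Finset.sum_map]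
    push_cast
    simp only [addRightEmbedding_apply]
    field_simp
    ring
  rw [← heq, add_re] at hpos
  linarith

theorem exists_mem_mellinDomain_tildeA {s : Fin (m + 1) → ℂ} (hs : s ∈ mellinDomain (m + 1) a) :
    ∃ c ∈ mellinDomain m (tildeA (m + 2) a),
      (∀ j, (c j).re < (s j.castSucc + leftExponent m a j.castSucc).re) ∧
      ∀ j, (c j).re < (s j.succ + rightExponent m a j.succ).re := by
  have hbetween (j : Fin m) : ∃ c : ℝ,
      (∀ S ∈ (Finset.range (m + 1)).powersetCard (j + 1),
        -(∑ k ∈ S, tildeA (m + 2) a k).re < c) ∧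
      c < (s j.castSucc + leftExponent m a j.castSucc).re ∧
      c < (s j.succ + rightExponent m a j.succ).re := by
    obtain ⟨c, hlower, hupper⟩ := Order.exists_between_finsets
      (lo := ((Finset.range (m + 1)).powersetCard (j + 1)).image
        fun S => -(∑ k ∈ S, tildeA (m + 2) a k).re)
      (hi := {(s j.castSucc + leftExponent m a j.castSucc).re,
        (s j.succ + rightExponent m a j.succ).re}) (by
          simp only [Finset.forall_mem_image, Finset.mem_insert, Finset.mem_singleton]
          rintro S hS _ (rfl | rfl)
          · exact neg_re_sum_tildeA_lt_left hs j hS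
          · exact neg_re_sum_tildeA_lt_right hs j hS)
    exact ⟨c, Finset.forall_mem_image.1 hlower, by simpa using hupper⟩
  choose c hlower hleft hright using hbetween
  refine ⟨fun j => c j, fun j S hS => ?_, by simpa using hleft, by simpa using hright⟩
  simpa [neg_lt_iff_pos_add] using hlower j S hS

theorem logWhitt_succ_mul_expDot (s : Fin (m + 1) → ℂ) (x : Fin (m + 1) → ℝ) :
    logWhitt (m + 1) a x * expDot (s / 2) x = (Real.pi : ℂ) ^ (-sumA (m + 2) a / 2) *
      whittStep (logWhitt m (tildeA (m + 2) a)) ((s + leftExponent m a) / 2)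
        ((s + rightExponent m a) / 2) x := by
  have hhalf (p : Fin (m + 1) → ℂ) : (s + p) / 2 = p / 2 + s / 2 := by
    ext j
    simp only [Pi.div_apply, Pi.add_apply]
    ring
  rw [logWhitt_succ, mul_assoc, whittStep_mul_expDot, hhalf, hhalf]

theorem stepConvergent_logWhitt {s : Fin (m + 1) → ℂ} {c : Fin m → ℂ}
    (hint : Integrable fun x => logWhitt m (tildeA (m + 2) a) x * expDot (c / 2) x)
    (hleft : ∀ j, (c j).re < (s j.castSucc + leftExponent m a j.castSucc).re)
    (hright : ∀ j, (c j).re < (s j.succ + rightExponent m a j.succ).re)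
    (hlast : 0 < (s (Fin.last m) + leftExponent m a (Fin.last m)).re)
    (hzero : 0 < (s 0 + rightExponent m a 0).re) :
    StepConvergent (logWhitt m (tildeA (m + 2) a)) (c / 2) ((s + leftExponent m a) / 2)
      ((s + rightExponent m a) / 2) where
  integrable := hint
  left j := by simpa [div_lt_div_iff_of_pos_right] using hleft j
  right j := by simpa [div_lt_div_iff_of_pos_right] using hright j
  last := by simpa using hlast
  zero := by simpa using hzero

theorem integrable_logWhitt_mul_expDot : ∀ {m : ℕ} {a : ℕ → ℂ} {s : Fin m → ℂ},
    s ∈ mellinDomain m a → Integrable fun x => logWhitt m a x * expDot (s / 2) x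
  | 0, _, _, _ => by
    rw [Measure.volume_pi_eq_dirac]
    exact integrable_dirac enorm_lt_top
  | m + 1, a, s, hs => by
    obtain ⟨c, hc, hleft, hright⟩ := exists_mem_mellinDomain_tildeA hs
    have hlast : 0 < (s (Fin.last m) + leftExponent m a (Fin.last m)).re := by
      rw [leftExponent_last]
      simpa using hs (Fin.last m) ((Finset.range (m + 1)).map (addRightEmbedding 1)) (by
        simp [Finset.mem_powersetCard, Finset.subset_iff])
    have hzero : 0 < (s 0 + rightExponent m a 0).re := by
      rw [rightExponent_zero]
      simpa using hs 0 {0} (by simp)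
    simp only [logWhitt_succ_mul_expDot]
    exact (stepConvergent_logWhitt (integrable_logWhitt_mul_expDot hc) hleft hright hlast
      hzero).integrable_whittStep.const_mul _

end MellinDomain

section MellinTransform

variable {m : ℕ} {a : ℕ → ℂ}

theorem integral_comp_inv_two_smul (f : (Fin m → ℝ) → ℂ) :
    ∫ x, f ((2⁻¹ : ℝ) • x) = 2 ^ m * ∫ x, f x := by
  rw [Measure.integral_comp_smul, Module.finrank_fin_fun, inv_pow, inv_inv,
    abs_of_pos (by positivity), real_smul]
  push_cast
  rfl

theorem Ufun_succ_eq_integral (s : ℕ → ℂ) :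
    Ufun (m + 1) a s =
      ∫ x, WhittAr (m + 1) a (extR fun i => Real.exp (x i)) * expDot (fun i : Fin m => s i) x := by
  rw [Ufun, Nat.add_sub_cancel, integral_posSet]
  refine integral_congr_ae (.of_forall fun x => ?_)
  have hexp (i : Fin m) : (Real.exp (x i) : ℂ) ≠ 0 := by simp
  simp only [Finset.prod_range, extR_val]
  rw [mul_assoc, ← Finset.prod_mul_distrib, expDot_eq_prod]
  simp only [div_mul_cancel₀ _ (hexp _), ofReal_exp_cpow]

theorem Ufun_succ_eq_laplace (s : ℕ → ℂ) :
    2 ^ m * Ufun (m + 1) a s = (Real.pi : ℂ) ^ (-∑ i : Fin m, s i) *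
      laplace (logWhitt m a) ((fun i : Fin m => s i) / 2) := by
  have hpi : (Real.pi : ℂ) ≠ 0 := ofReal_ne_zero.2 Real.pi_ne_zero
  rw [Ufun_succ_eq_integral, ← integral_sub_right_eq_self _ (fun _ : Fin m => Real.log Real.pi),
    ← integral_comp_inv_two_smul, laplace, ← integral_const_mul]
  refine integral_congr_ae (.of_forall fun x => ?_)
  have harg : WhittAr (m + 1) a (extR fun i => Real.exp (((2⁻¹ : ℝ) • x -
      fun _ : Fin m => Real.log Real.pi) i)) = logWhitt m a x := by
    simp only [logWhitt, Pi.sub_apply, Pi.smul_apply, smul_eq_mul, Real.exp_sub,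
      Real.exp_log Real.pi_pos, inv_mul_eq_div]
  have hexp : expDot (fun i : Fin m => s i) ((2⁻¹ : ℝ) • x - fun _ => Real.log Real.pi) =
      (Real.pi : ℂ) ^ (-∑ i : Fin m, s i) * expDot ((fun i : Fin m => s i) / 2) x := by
    rw [cpow_def_of_ne_zero hpi, ← ofReal_log Real.pi_nonneg, expDot, expDot, ← Complex.exp_add]
    congr 1
    simp only [Pi.sub_apply, Pi.smul_apply, smul_eq_mul, Pi.div_apply, Pi.ofNat_apply, mul_neg,
      Finset.mul_sum, ← Finset.sum_neg_distrib, ← Finset.sum_add_distrib]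
    refine Finset.sum_congr rfl fun i _ => ?_
    push_cast
    ring
  simp only [harg, hexp]
  ring

/-- The product over the arguments of the `Γ_ℝ`-factors of the recursion, `n = m + 2`, with an
arbitrary function `G` in place of `Γ_ℝ`. -/
def barnesProduct (G : ℂ → ℂ) (m : ℕ) (a : ℕ → ℂ) (s : Fin (m + 1) → ℂ) (z : Fin m → ℂ) : ℂ :=
  G (s 0 + rightExponent m a 0) * G (s (Fin.last m) + leftExponent m a (Fin.last m)) *
    ∏ j : Fin m, G (s j.castSucc + leftExponent m a j.castSucc - z j) *
      G (s j.succ + rightExponent m a j.succ - z j)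

theorem barnesProduct_mul (G H : ℂ → ℂ) (s : Fin (m + 1) → ℂ) (z : Fin m → ℂ) :
    barnesProduct (fun w => G w * H w) m a s z =
      barnesProduct G m a s z * barnesProduct H m a s z := by
  simp only [barnesProduct, Finset.prod_mul_distrib]
  ring

theorem sum_leftExponent_add_sum_rightExponent :
    ∑ j, leftExponent m a j + ∑ j, rightExponent m a j = sumA (m + 2) a := by
  have hrev : ∑ j, rightExponent m a j = ∑ j : Fin (m + 1), ((j : ℂ) + 1) * a 0 / (m + 1) := by
    rw [← Equiv.sum_comp Fin.revPerm]
    refine Finset.sum_congr rfl fun j _ => ?_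
    rw [rightExponent, Fin.revPerm_apply, Fin.val_rev, Nat.cast_sub (by omega)]
    push_cast
    ring
  simp [hrev, leftExponent, Finset.sum_add_distrib, Finset.sum_neg_distrib]

theorem barnesProduct_cpow {b : ℂ} (hb : b ≠ 0) (s : Fin (m + 1) → ℂ) (z : Fin m → ℂ) :
    barnesProduct (fun w => b ^ (-w / 2)) m a s z =
      b ^ (-(∑ j, s j) - sumA (m + 2) a / 2 + ∑ j, z j) := by
  simp only [barnesProduct, cpow_def_of_ne_zero hb, ← Complex.exp_add, ← Complex.exp_sum]
  congr 1
  have hs_left := Fin.sum_univ_castSucc fun j => s j + leftExponent m a j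
  have hs_right := Fin.sum_univ_succ fun j => s j + rightExponent m a j
  rw [← sum_leftExponent_add_sum_rightExponent]
  simp only [Finset.sum_add_distrib] at hs_left hs_right
  simp only [← mul_add, ← Finset.mul_sum, neg_sub, sub_div, neg_div, add_div,
    Finset.sum_add_distrib, Finset.sum_sub_distrib, ← Finset.sum_div]
  linear_combination (Complex.log b / 2) * (hs_left + hs_right)

theorem barnesProduct_GammaR (s : Fin (m + 1) → ℂ) (z : Fin m → ℂ) :
    barnesProduct GammaR m a s z =
      (Real.pi : ℂ) ^ (-(∑ j, s j) - sumA (m + 2) a / 2 + ∑ j, z j) *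
        barnesProduct (fun w => Gamma (w / 2)) m a s z := by
  rw [← barnesProduct_cpow (ofReal_ne_zero.2 Real.pi_ne_zero), ← barnesProduct_mul]
  rfl

theorem laplace_logWhitt_succ {s : Fin (m + 1) → ℂ} {c : Fin m → ℂ}
    (h : StepConvergent (logWhitt m (tildeA (m + 2) a)) (c / 2) ((s + leftExponent m a) / 2)
      ((s + rightExponent m a) / 2)) :
    2 ^ m * laplace (logWhitt (m + 1) a) (s / 2) =
      (Real.pi : ℂ) ^ (-sumA (m + 2) a / 2) * ((2 * Real.pi : ℂ) ^ m)⁻¹ *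
        ∫ t : Fin m → ℝ,
          laplace (logWhitt m (tildeA (m + 2) a)) ((fun j => c j + t j * I) / 2) *
            barnesProduct (fun w => Gamma (w / 2)) m a s fun j => c j + t j * I := by
  let F : (Fin m → ℝ) → ℂ := fun t => laplace (logWhitt m (tildeA (m + 2) a))
    (fun j => (c / 2) j + t j * I) *
      ∏ j : Fin m, Gamma (((s + leftExponent m a) / 2) j.castSucc - ((c / 2) j + t j * I)) *
        Gamma (((s + rightExponent m a) / 2) j.succ - ((c / 2) j + t j * I))
  have hrescale : ∫ t, F ((2⁻¹ : ℝ) • t) = 2 ^ m * ∫ t, F t := integral_comp_inv_two_smul F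
  have hstep : laplace (logWhitt (m + 1) a) (s / 2) = (Real.pi : ℂ) ^ (-sumA (m + 2) a / 2) *
      (Gamma (((s + rightExponent m a) / 2) 0) *
        Gamma (((s + leftExponent m a) / 2) (Fin.last m)) *
          (((2 * Real.pi : ℂ) ^ m)⁻¹ * ∫ t, F t)) := by
    rw [← h.integral_whittStep_eq_laplace, ← integral_const_mul, laplace]
    simp only [logWhitt_succ_mul_expDot]
  calc 2 ^ m * laplace (logWhitt (m + 1) a) (s / 2)
      = (Real.pi : ℂ) ^ (-sumA (m + 2) a / 2) * ((2 * Real.pi : ℂ) ^ m)⁻¹ *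
          (Gamma (((s + rightExponent m a) / 2) 0) *
            Gamma (((s + leftExponent m a) / 2) (Fin.last m)) * ∫ t, F ((2⁻¹ : ℝ) • t)) := by
        rw [hstep, hrescale]
        ring
    _ = _ := by
        rw [← integral_const_mul]
        congr 2 with t
        have harg (j : Fin m) : (c / 2) j + (((2⁻¹ : ℝ) • t) j : ℝ) * I =
            (c j + t j * I) / 2 := by
          simp only [Pi.div_apply, Pi.ofNat_apply, Pi.smul_apply, smul_eq_mul, ofReal_mul,
            ofReal_inv, ofReal_ofNat]
          ring
        have hdiv : (fun j => c j + t j * I) / 2 = fun j => (c j + t j * I) / 2 := rfl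
        simp only [F, harg]
        simp only [hdiv, barnesProduct, Pi.div_apply, Pi.add_apply, Pi.ofNat_apply, ← sub_div]
        ring

theorem Ufun_add_two {s : ℕ → ℂ} {c : Fin m → ℂ}
    (h : StepConvergent (logWhitt m (tildeA (m + 2) a)) (c / 2)
      (((fun j : Fin (m + 1) => s j) + leftExponent m a) / 2)
      (((fun j : Fin (m + 1) => s j) + rightExponent m a) / 2))
    {z : (Fin m → ℝ) → ℕ → ℂ} (hz : ∀ t (j : Fin m), z t j = c j + t j * I) :
    Ufun (m + 2) a s = 2⁻¹ * ((4 * Real.pi : ℂ) ^ m)⁻¹ *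
      ∫ t : Fin m → ℝ, Ufun (m + 1) (tildeA (m + 2) a) (z t) *
        barnesProduct GammaR m a (fun j => s j) fun j => z t j := by
  have hpi : (Real.pi : ℂ) ≠ 0 := ofReal_ne_zero.2 Real.pi_ne_zero
  have htwo : (2 : ℂ) ^ m ≠ 0 := pow_ne_zero m two_ne_zero
  have hpoint (t : Fin m → ℝ) : 2 ^ m * (Ufun (m + 1) (tildeA (m + 2) a) (z t) *
      barnesProduct GammaR m a (fun j => s j) fun j => z t j) =
      (Real.pi : ℂ) ^ (-∑ j : Fin (m + 1), s j) * (Real.pi : ℂ) ^ (-sumA (m + 2) a / 2) *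
        (laplace (logWhitt m (tildeA (m + 2) a)) ((fun j => c j + t j * I) / 2) *
          barnesProduct (fun w => Gamma (w / 2)) m a (fun j => s j) fun j => c j + t j * I) := by
    rw [← mul_assoc, Ufun_succ_eq_laplace, barnesProduct_GammaR]
    simp only [hz]
    rw [← cpow_add _ _ hpi, mul_mul_mul_comm, ← cpow_add _ _ hpi]
    congr 2
    ring
  have hintegral := integral_congr_ae (μ := volume) (.of_forall hpoint)
  simp only [integral_const_mul] at hintegral
  have hconst : (2 : ℂ) ^ m * 2 ^ (m + 1) * (2⁻¹ * ((4 * Real.pi : ℂ) ^ m)⁻¹) =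
      ((2 * Real.pi : ℂ) ^ m)⁻¹ * 2 ^ m := by
    rw [show (4 * Real.pi : ℂ) = 2 * (2 * Real.pi) by ring, mul_pow, pow_succ]
    field_simp
  refine mul_left_cancel₀ (mul_ne_zero htwo (pow_ne_zero (m + 1) two_ne_zero)) ?_
  rw [← mul_assoc, hconst, mul_assoc (_⁻¹), hintegral, mul_assoc, Ufun_succ_eq_laplace,
    mul_left_comm, laplace_logWhitt_succ h]
  ring

end MellinTransform

section Recursion

variable {a : ℕ → ℂ}

/-- The argument `s_j - z_j - j a_1/(n-1)` of the `Γ_ℝ`-factors of the recursion. -/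
def leftArgument (n : ℕ) (a s z : ℕ → ℂ) (j : ℕ) : ℂ :=
  s (j - 1) - Zext n a z j - (j : ℂ) * a 0 / ((n : ℂ) - 1)

/-- The argument `s_j - z_{j-1} + (n-j) a_1/(n-1)` of the `Γ_ℝ`-factors of the recursion. -/
def rightArgument (n : ℕ) (a s z : ℕ → ℂ) (j : ℕ) : ℂ :=
  s (j - 1) - Zext n a z (j - 1) + ((n - j : ℕ) : ℂ) * a 0 / ((n : ℂ) - 1)

theorem natCast_add_two_sub_one (m : ℕ) : ((m + 2 : ℕ) : ℂ) - 1 = m + 1 := by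
  push_cast
  ring

theorem leftArgument_castSucc {m : ℕ} (s z : ℕ → ℂ) (j : Fin m) :
    leftArgument (m + 2) a s z (j + 1) = s j + leftExponent m a j.castSucc - z j := by
  rw [leftArgument, Zext, if_neg (by omega), if_pos (by omega), leftExponent_castSucc,
    natCast_add_two_sub_one, Nat.add_sub_cancel]
  push_cast
  ring

theorem leftArgument_last (m : ℕ) (s z : ℕ → ℂ) :
    leftArgument (m + 2) a s z (m + 1) = s m + leftExponent m a (Fin.last m) := by
  rw [leftArgument, Zext, if_neg (by omega), if_neg (by omega), leftExponent, Pi.add_apply,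
    Pi.single_eq_same, Fin.val_last, natCast_add_two_sub_one, Nat.add_sub_cancel]
  push_cast
  ring

theorem rightArgument_zero (m : ℕ) (s z : ℕ → ℂ) :
    rightArgument (m + 2) a s z 1 = s 0 + rightExponent m a 0 := by
  rw [rightArgument, Zext, if_pos rfl, natCast_add_two_sub_one, sub_zero, rightExponent]
  simp

theorem rightArgument_succ {m : ℕ} (s z : ℕ → ℂ) (j : Fin m) :
    rightArgument (m + 2) a s z (j + 1 + 1) =
      s (j + 1) + rightExponent m a j.succ - z j := by
  rw [rightArgument, Nat.add_sub_cancel, Zext, if_neg (by omega), if_pos (by omega),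
    rightExponent, natCast_add_two_sub_one, Nat.cast_sub (by omega), Fin.val_succ,
    Nat.add_sub_cancel]
  push_cast
  ring

theorem prod_leftArgument_mul_rightArgument (G : ℂ → ℂ) (m : ℕ) (s z : ℕ → ℂ) :
    ∏ j ∈ Finset.Icc 1 (m + 1),
        G (leftArgument (m + 2) a s z j) * G (rightArgument (m + 2) a s z j) =
      barnesProduct G m a (fun j => s j) fun j => z j := by
  rw [← Finset.Ico_add_one_right_eq_Icc, Finset.prod_Ico_eq_prod_range, Nat.add_sub_cancel,
    Finset.prod_range]
  simp only [add_comm 1, Finset.prod_mul_distrib]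
  rw [Fin.prod_univ_castSucc, Fin.prod_univ_succ fun j : Fin (m + 1) =>
    G (rightArgument (m + 2) a s z (j + 1))]
  simp only [Fin.val_castSucc, Fin.val_last, Fin.val_succ, Fin.val_zero, zero_add,
    leftArgument_castSucc, leftArgument_last, rightArgument_zero, rightArgument_succ,
    barnesProduct, Finset.prod_mul_distrib]
  ring

theorem stepConvergent_of_contour {m : ℕ} {s : ℕ → ℂ} {c : ℕ → ℝ}
    (hc : (fun j : Fin m => (c j : ℂ)) ∈ mellinDomain m (tildeA (m + 2) a))
    (h : ∀ j, 1 ≤ j → j ≤ m + 1 →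
      0 < (leftArgument (m + 2) a s (fun i => c i) j).re ∧
        0 < (rightArgument (m + 2) a s (fun i => c i) j).re) :
    StepConvergent (logWhitt m (tildeA (m + 2) a)) ((fun j : Fin m => (c j : ℂ)) / 2)
      (((fun j : Fin (m + 1) => s j) + leftExponent m a) / 2)
      (((fun j : Fin (m + 1) => s j) + rightExponent m a) / 2) := by
  refine stepConvergent_logWhitt (integrable_logWhitt_mul_expDot hc) (fun j => ?_) (fun j => ?_)
    ?_ ?_
  · have hj := (h (j + 1) (by omega) (by omega)).1
    rwa [leftArgument_castSucc, sub_re, sub_pos] at hj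
  · have hj := (h (j + 1 + 1) (by omega) (by omega)).2
    rwa [rightArgument_succ, sub_re, sub_pos] at hj
  · have hlast := (h (m + 1) (by omega) le_rfl).1
    rwa [leftArgument_last] at hlast
  · have hzero := (h 1 le_rfl (by omega)).2
    rwa [rightArgument_zero] at hzero

theorem U_mellin_barnes_recursion_general {n : ℕ} (hn : 2 ≤ n) {s : ℕ → ℂ} {c : ℕ → ℝ}
    (hc : (fun j : Fin (n - 2) => (c j : ℂ)) ∈ mellinDomain (n - 2) (tildeA n a))
    (h : ∀ j, 1 ≤ j → j ≤ n - 1 →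
      0 < (leftArgument n a s (fun i => c i) j).re ∧
        0 < (rightArgument n a s (fun i => c i) j).re) :
    Ufun n a s = 2⁻¹ / (4 * (Real.pi : ℂ) * I) ^ (n - 2) *
      VIntK (n - 2) c fun z => Ufun (n - 1) (tildeA n a) z *
        ∏ j ∈ Finset.Icc 1 (n - 1),
          GammaR (leftArgument n a s z j) * GammaR (rightArgument n a s z j) := by
  obtain ⟨m, rfl⟩ : ∃ m, n = m + 2 := ⟨n - 2, by omega⟩
  have hconst : 2⁻¹ * ((4 * Real.pi : ℂ) ^ m)⁻¹ = 2⁻¹ / (4 * Real.pi * I) ^ m * I ^ m := by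
    rw [mul_pow _ I]
    field_simp
  rw [Ufun_add_two (m := m) (stepConvergent_of_contour hc h)
    (z := fun t i => c i + (extR0 t i : ℝ) * I) fun t j => by simp [extR0], hconst, mul_assoc]
  simp only [VIntK, Nat.add_sub_cancel, Nat.add_succ_sub_one, prod_leftArgument_mul_rightArgument]
  rfl

theorem Ufun_one (s : ℕ → ℂ) : Ufun 1 a s = 1 := by
  rw [Ufun_succ_eq_integral, Measure.volume_pi_eq_dirac, integral_dirac]
  simp [WhittAr, expDot]

theorem Ufun_two {σ : ℂ} (h0 : 0 < (σ + a 0).re) (h1 : 0 < (σ + a 1).re) :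
    Ufun 2 a (fun _ => σ) = 2⁻¹ * (GammaR (σ + a 0) * GammaR (σ + a 1)) := by
  have hlast : leftExponent 0 a (Fin.last 0) = a 1 := by
    rw [leftExponent_last, zero_add, Finset.sum_range_one]
  have hstep := stepConvergent_logWhitt (s := fun _ => σ) (c := 0)
    (integrable_logWhitt_mul_expDot (s := 0) (a := tildeA 2 a) fun j => j.elim0)
    (fun j => j.elim0) (fun j => j.elim0) (by rwa [hlast]) (by rwa [rightExponent_zero])
  rw [Ufun_add_two hstep (z := fun _ _ => 0) fun _ j => j.elim0,
    Measure.volume_pi_eq_dirac, integral_dirac, Ufun_one, barnesProduct, hlast, rightExponent_zero]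
  simp

end Recursion

/-- Mellin–Barnes recursion for `U_{n,a}` (Proposition 1.5 of Ishii–Stade),
together with the base case `n = 2`. -/
theorem U_mellin_barnes_recursion (n : ℕ) (hn : 3 ≤ n) (a : ℕ → ℂ)
    (ha : ∀ j < n, (a j).re = 0) (s : ℕ → ℂ) (hs : ∀ j < n - 1, 0 < (s j).re) :
    (∀ c : ℕ → ℝ,
      (∀ i < n - 2, 0 < c i) →
      (∀ j, 1 ≤ j → j ≤ n - 1 →
        0 < (s (j - 1) - Zext n a (fun i => (c i : ℂ)) j -
              (j : ℂ) * a 0 / ((n : ℂ) - 1)).re ∧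
        0 < (s (j - 1) - Zext n a (fun i => (c i : ℂ)) (j - 1) +
              ((n - j : ℕ) : ℂ) * a 0 / ((n : ℂ) - 1)).re) →
      Ufun n a s =
        2⁻¹ / (4 * (Real.pi : ℂ) * Complex.I) ^ (n - 2) *
          VIntK (n - 2) c (fun z =>
            Ufun (n - 1) (tildeA n a) z *
              ∏ j ∈ Finset.Icc 1 (n - 1),
                GammaR (s (j - 1) - Zext n a z j - (j : ℂ) * a 0 / ((n : ℂ) - 1)) *
                  GammaR (s (j - 1) - Zext n a z (j - 1) +
                    ((n - j : ℕ) : ℂ) * a 0 / ((n : ℂ) - 1)))) ∧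
    (∀ b : ℕ → ℂ, ∀ σ : ℂ, (b 0).re = 0 → (b 1).re = 0 → 0 < σ.re →
      Ufun 2 b (fun _ => σ) = 2⁻¹ * (GammaR (σ + b 0) * GammaR (σ + b 1))) := by
  refine ⟨fun c hc h => U_mellin_barnes_recursion_general (by omega) ?_ h,
    fun b σ h0 h1 hσ => Ufun_two (by simpa [h0] using hσ) (by simpa [h1] using hσ)⟩
  refine mem_mellinDomain_of_re_eq_zero (fun k hk => ?_) fun j => by simpa using hc j j.2
  have hdiv : (a 0 / ((n : ℂ) - 1)).re = 0 := by
    rw [← ofReal_natCast, ← ofReal_one, ← ofReal_sub, div_ofReal_re, ha 0 (by omega), zero_div]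
  rw [tildeA, add_re, hdiv, ha (k + 1) (by omega), add_zero]

end
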